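/- arXiv:2507.01405 — 2 statements merged into one kernel-verified Lean document; each statement's English description precedes it below -/
import Mathlib

section
/- For every x : ℤ, the symmetric 13×13 integer matrix M indexed by {0,…,12} with entries M₀₀ = −2, M₀₁ = 2, M₀₂ = −2, M₀₃ = −1, M₁₁ = 14, M₁₂ = x, M₁₃ = 3, M₂₂ = 0, M₂₃ = 0, M₃₃ = −1, M₃₄ = 1, Mᵢᵢ = −2 for 4 ≤ i ≤ 12, and all other entries (up to symmetry) equal to 0, satisfies det M = 2¹²·(x − 8). Consequently, if det M = 0 then x = 8. -/
open Matrix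

/-- The symmetric 13×13 intersection matrix of `K_W, D, F, G, N₀, …, N₈` in the case `k = 9`,
with `D·F = x` as a parameter. Entries are specified on `i ≤ j` and extended by symmetry. -/
def interMat9 (x : ℤ) : Matrix (Fin 13) (Fin 13) ℤ :=
  Matrix.of fun i j =>
    let a := min i.val j.val
    let b := max i.val j.val
    if a = 0 ∧ b = 0 then -2
    else if a = 0 ∧ b = 1 then 2
    else if a = 0 ∧ b = 2 then -2
    else if a = 0 ∧ b = 3 then -1
    else if a = 1 ∧ b = 1 then 14
    else if a = 1 ∧ b = 2 then x
    else if a = 1 ∧ b = 3 then 3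
    else if a = 2 ∧ b = 2 then 0
    else if a = 2 ∧ b = 3 then 0
    else if a = 3 ∧ b = 3 then -1
    else if a = 3 ∧ b = 4 then 1
    else if 4 ≤ a ∧ a = b then -2
    else 0

/-!
The classes `G` and `G + N₀` are orthogonal of square `-1`, so `G` and `N₀` span a unimodular
lattice, which splits off orthogonally over `ℤ`; geometrically, `G` and then `N₀` are contracted.
The classes `N₁, …, N₈` are orthogonal to everything else and contribute `(-2)⁸`. What remains is
the `3 × 3` intersection matrix of the images of `K_W, D, F`. The image of `K_W` is isotropic, so
the determinant has no term in `x²`.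
-/

-- The Schur complement formula with `X` in the role of `B * D⁻¹`, so `D` need not be invertible.
lemma det_fromBlocks_mul₁₂ {m n R : Type*} [Fintype m] [DecidableEq m] [Fintype n]
    [DecidableEq n] [CommRing R] (A : Matrix m m R) (X : Matrix m n R) (C : Matrix n m R)
    (D : Matrix n n R) :
    (fromBlocks A (X * D) C D).det = (A - X * C).det * D.det := by
  have factor : fromBlocks A (X * D) C D =
      fromBlocks 1 X 0 1 * fromBlocks (A - X * C) 0 C D := by
    simp [fromBlocks_multiply]
  rw [factor, det_mul, det_fromBlocks_zero₂₁, det_fromBlocks_zero₁₂, det_one, det_one, one_mul,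
    one_mul]

/-- The intersection matrix of `K_W, D, F`. -/
def gramKDF (x : ℤ) : Matrix (Fin 3) (Fin 3) ℤ :=
  !![-2, 2, -2; 2, 14, x; -2, x, 0]

/-- The intersection numbers of `K_W, D, F` (rows) with `G, N₀` (columns). -/
def gramCross : Matrix (Fin 3) (Fin 2) ℤ :=
  !![-1, 0; 3, 0; 0, 0]

/-- The intersection matrix of the contractible chain `G, N₀`. -/
def gramChain : Matrix (Fin 2) (Fin 2) ℤ :=
  !![-1, 1; 1, -2]

/-- The coordinates in `G, N₀` of the orthogonal projections of `K_W, D, F` to their span.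
Subtracting them gives the pullbacks `K_W - 2G - N₀`, `D + 6G + 3N₀`, `F` of the images under the
contraction. -/
def projChain : Matrix (Fin 3) (Fin 2) ℤ :=
  !![2, 1; -6, -3; 0, 0]

/-- The intersection matrix of the images of `K_W, D, F` after contracting `G` and `N₀`. -/
def gramContracted (x : ℤ) : Matrix (Fin 3) (Fin 3) ℤ :=
  !![0, -4, -2; -4, 32, x; -2, x, 0]

/-- The splitting of the 13 classes into `K_W, D, F`, then `G, N₀`, then `N₁, …, N₈`. -/
def classEquiv : (Fin 3 ⊕ Fin 2) ⊕ Fin 8 ≃ Fin 13 :=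
  (finSumFinEquiv.sumCongr (Equiv.refl _)).trans finSumFinEquiv

lemma interMat9_submatrix_classEquiv (x : ℤ) :
    (interMat9 x).submatrix classEquiv classEquiv =
      fromBlocks (fromBlocks (gramKDF x) gramCross gramCrossᵀ gramChain) 0 0
        (diagonal fun _ => -2) := by
  ext i j
  rcases i with (i | i) | i <;> rcases j with (j | j) | j <;> fin_cases i <;> fin_cases j <;> rfl

lemma projChain_mul_gramChain : projChain * gramChain = gramCross := by
  decide

lemma det_gramChain : gramChain.det = 1 := by
  simp [gramChain, det_fin_two_of]

lemma gramKDF_sub_projChain_mul_transpose (x : ℤ) :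
    gramKDF x - projChain * gramCrossᵀ = gramContracted x := by
  have proj_gram : projChain * gramCrossᵀ = !![-2, 6, 0; 6, -18, 0; 0, 0, 0] := by
    decide
  rw [proj_gram]
  ext i j
  fin_cases i <;> fin_cases j <;> simp [gramKDF, gramContracted]

lemma det_gramContracted (x : ℤ) : (gramContracted x).det = 2 ^ 4 * (x - 8) := by
  simp only [gramContracted, det_fin_three, of_apply, cons_val', cons_val]
  ring

lemma det_fromBlocks_gramKDF_gramChain (x : ℤ) :
    (fromBlocks (gramKDF x) gramCross gramCrossᵀ gramChain).det = 2 ^ 4 * (x - 8) := by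
  calc (fromBlocks (gramKDF x) gramCross gramCrossᵀ gramChain).det
      = (fromBlocks (gramKDF x) (projChain * gramChain) gramCrossᵀ gramChain).det := by
        rw [projChain_mul_gramChain]
    _ = (gramContracted x).det := by
        rw [det_fromBlocks_mul₁₂, gramKDF_sub_projChain_mul_transpose, det_gramChain, mul_one]
    _ = 2 ^ 4 * (x - 8) := det_gramContracted x

theorem det_interMat9 (x : ℤ) :
    (interMat9 x).det = 2 ^ 12 * (x - 8) ∧ ((interMat9 x).det = 0 → x = 8) := by
  have det_eq : (interMat9 x).det = 2 ^ 12 * (x - 8) :=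
    calc (interMat9 x).det
        = ((interMat9 x).submatrix classEquiv classEquiv).det :=
          (det_submatrix_equiv_self classEquiv _).symm
      _ = 2 ^ 4 * (x - 8) * (-2) ^ 8 := by
          rw [interMat9_submatrix_classEquiv, det_fromBlocks_zero₂₁,
            det_fromBlocks_gramKDF_gramChain, det_diagonal, Finset.prod_const, Finset.card_univ,
            Fintype.card_fin]
      _ = 2 ^ 12 * (x - 8) := by ring
  refine ⟨det_eq, fun det_zero => ?_⟩
  rw [det_eq] at det_zero
  lia
end

section
/- Let n : ℕ and let ⟨·,·⟩ denote the Minkowski bilinear form on ℝ^{n+1}. Suppose K, D, F, G, N : Fin (n+1) → ℝ satisfy ⟨K,K⟩ = −2, ⟨K,D⟩ = 2, ⟨D,D⟩ = 14, ⟨K,F⟩ = −2, ⟨D,F⟩ = 8, ⟨F,F⟩ = 0, ⟨K,G⟩ = −1, ⟨D,G⟩ = 3, ⟨G,G⟩ = −1, ⟨F,G⟩ = 0, ⟨K,N⟩ = 0, ⟨D,N⟩ = 0, ⟨F,N⟩ = 0, ⟨G,N⟩ = 1 and ⟨N,N⟩ = −2. Then 4·K + D = 2·F + 2·G + N. -/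
/-- The Minkowski (Lorentzian) bilinear form on `ℝ^{n+1}`:
`⟨x, y⟩ = x 0 * y 0 - ∑_{i=1}^{n} x i * y i`. -/
def mink (n : ℕ) (x y : Fin (n + 1) → ℝ) : ℝ :=
  x 0 * y 0 - ∑ i ∈ Finset.Ioi (0 : Fin (n + 1)), x i * y i

/-!
The class `E = 4K + D - (2F + 2G + N)` is orthogonal to each of `K, D, F, G, N`, hence to itself
and to `M = 3K + D`. As `⟨M, M⟩ = 8 > 0`, the form is negative definite on the orthogonal
complement of `M` by the Hodge index theorem, so `E = 0`.
-/

open Matrix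

section HodgeIndex

variable {R V : Type*} [CommSemiring R] [Preorder R] [AddCommMonoid V] [Module R V]

/-- The conclusion of the Hodge (algebraic) index theorem for a bilinear form: it is negative
definite on the orthogonal complement of every vector of positive square. Stated over any ordered
ring, it covers both integral intersection forms and real Lorentzian forms. -/
def HodgeIndexProperty (B : LinearMap.BilinForm R V) : Prop :=
  ∀ ⦃m v : V⦄, 0 < B m m → B m v = 0 → v ≠ 0 → B v v < 0

lemma HodgeIndexProperty.eq_zero {B : LinearMap.BilinForm R V} (hB : HodgeIndexProperty B) {m v : V}
    (hm : 0 < B m m) (hmv : B m v = 0) (hv : 0 ≤ B v v) : v = 0 :=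
  by_contra fun hv0 ↦ (hB hm hmv hv0).not_ge hv

end HodgeIndex

lemma dotProduct_sq_le {ι R : Type*} [Fintype ι] [CommSemiring R] [LinearOrder R]
    [IsStrictOrderedRing R] [ExistsAddOfLE R] (a b : ι → R) :
    (a ⬝ᵥ b) ^ 2 ≤ (a ⬝ᵥ a) * (b ⬝ᵥ b) := by
  simpa only [dotProduct, ← sq] using Finset.univ.sum_mul_sq_le_sq_mul_sq a b

section Minkowski

variable {n : ℕ}

lemma mink_eq_sub_dotProduct (x y : Fin (n + 1) → ℝ) :
    mink n x y = x 0 * y 0 - vecTail x ⬝ᵥ vecTail y := by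
  rw [mink, Fin.sum_Ioi_zero]; rfl

lemma mink_comm (x y : Fin (n + 1) → ℝ) : mink n x y = mink n y x := by
  simp only [mink, mul_comm]

lemma mink_add_left (x y z : Fin (n + 1) → ℝ) :
    mink n (x + y) z = mink n x z + mink n y z := by
  simp only [mink_eq_sub_dotProduct, Pi.add_apply, tail_add, add_dotProduct]; ring

lemma mink_smul_left (c : ℝ) (x y : Fin (n + 1) → ℝ) :
    mink n (c • x) y = c * mink n x y := by
  simp only [mink, Pi.smul_apply, smul_eq_mul, mul_assoc, mul_sub, Finset.mul_sum]

/-- The Minkowski form `mink n` bundled as a bilinear form. -/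
def minkForm (n : ℕ) : LinearMap.BilinForm ℝ (Fin (n + 1) → ℝ) :=
  LinearMap.mk₂ ℝ (mink n) mink_add_left mink_smul_left
    (fun x y z ↦ by simp only [mink_comm x, mink_add_left])
    (fun c x y ↦ by simp only [mink_comm x, mink_smul_left, smul_eq_mul])

lemma minkForm_isSymm : (minkForm n).IsSymm := ⟨mink_comm⟩

theorem mink_self_neg_of_mink_eq_zero {m v : Fin (n + 1) → ℝ} (hm : 0 < mink n m m)
    (hmv : mink n m v = 0) (hv : v ≠ 0) : mink n v v < 0 := by
  rw [mink_eq_sub_dotProduct, ← sq, sub_pos] at hm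
  rw [mink_eq_sub_dotProduct, sub_eq_zero] at hmv
  rw [mink_eq_sub_dotProduct, ← sq, sub_neg]
  have hm0 : 0 < m 0 ^ 2 := (dotProduct_self_star_nonneg (vecTail m)).trans_lt hm
  have htail : vecTail v ≠ 0 := fun htail ↦ hv <| by
    rw [htail, dotProduct_zero] at hmv
    have hv0 : v 0 = 0 :=
      (mul_eq_zero.mp hmv).resolve_left ((pow_ne_zero_iff two_ne_zero).mp hm0.ne')
    rw [← cons_head_tail v, htail, vecHead, hv0, cons_zero_zero]
  refine lt_of_mul_lt_mul_left ?_ hm0.le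
  calc m 0 ^ 2 * v 0 ^ 2 = (vecTail m ⬝ᵥ vecTail v) ^ 2 := by rw [← mul_pow, hmv]
    _ ≤ (vecTail m ⬝ᵥ vecTail m) * (vecTail v ⬝ᵥ vecTail v) := dotProduct_sq_le _ _
    _ < m 0 ^ 2 * (vecTail v ⬝ᵥ vecTail v) :=
      mul_lt_mul_of_pos_right hm (dotProduct_self_star_pos_iff.mpr htail)

lemma minkForm_hodgeIndexProperty : HodgeIndexProperty (minkForm n) :=
  fun _ _ ↦ mink_self_neg_of_mink_eq_zero

end Minkowski

theorem case9_M4_decomposition_general {R V : Type*} [CommRing R] [PartialOrder R]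
    [IsStrictOrderedRing R] [AddCommGroup V] [Module R V] {B : LinearMap.BilinForm R V}
    (hsymm : B.IsSymm) (hindex : HodgeIndexProperty B) {K D F G N : V}
    (hKK : B K K = -2) (hKD : B K D = 2) (hDD : B D D = 14)
    (hKF : B K F = -2) (hDF : B D F = 8) (hFF : B F F = 0)
    (hKG : B K G = -1) (hDG : B D G = 3) (hGG : B G G = -1) (hFG : B F G = 0)
    (hKN : B K N = 0) (hDN : B D N = 0) (hFN : B F N = 0)
    (hGN : B G N = 1) (hNN : B N N = -2) :
    4 • K + D = 2 • F + 2 • G + N := by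
  let E := 4 • K + D - (2 • F + 2 • G + N)
  have apply_E (x : V) : B x E = 4 * B x K + B x D - (2 * B x F + 2 * B x G + B x N) := by
    simp [E]
  have hKE : B K E = 0 := by rw [apply_E, hKK, hKD, hKF, hKG, hKN]; norm_num
  have hDE : B D E = 0 := by rw [apply_E, hsymm.eq D K, hKD, hDD, hDF, hDG, hDN]; norm_num
  have hFE : B F E = 0 := by
    rw [apply_E, hsymm.eq F K, hsymm.eq F D, hKF, hDF, hFF, hFG, hFN]; norm_num
  have hGE : B G E = 0 := by
    rw [apply_E, hsymm.eq G K, hsymm.eq G D, hsymm.eq G F, hKG, hDG, hFG, hGG, hGN]; norm_num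
  have hNE : B N E = 0 := by
    rw [apply_E, hsymm.eq N K, hsymm.eq N D, hsymm.eq N F, hsymm.eq N G,
      hKN, hDN, hFN, hGN, hNN]; norm_num
  have hEE : B E E = 0 := by
    rw [apply_E, hsymm.eq E K, hsymm.eq E D, hsymm.eq E F, hsymm.eq E G, hsymm.eq E N,
      hKE, hDE, hFE, hGE, hNE]; norm_num
  have hME : B (3 • K + D) E = 0 := by simp [hKE, hDE]
  have hMM : B (3 • K + D) (3 • K + D) = 8 := by
    simp only [map_add, map_nsmul, LinearMap.add_apply, LinearMap.smul_apply, nsmul_eq_mul,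
      hKK, hKD, hsymm.eq D K, hDD]
    norm_num
  exact sub_eq_zero.mp <| hindex.eq_zero (hMM ▸ Nat.ofNat_pos) hME hEE.ge

/-- Step 2 of Proposition 2.6 (case k = 9): `4K_W + D ≡ 2F + 2G + N₀`. -/
theorem case9_M4_decomposition (n : ℕ) (K D F G N : Fin (n + 1) → ℝ)
    (hKK : mink n K K = -2) (hKD : mink n K D = 2) (hDD : mink n D D = 14)
    (hKF : mink n K F = -2) (hDF : mink n D F = 8) (hFF : mink n F F = 0)
    (hKG : mink n K G = -1) (hDG : mink n D G = 3) (hGG : mink n G G = -1)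
    (hFG : mink n F G = 0)
    (hKN : mink n K N = 0) (hDN : mink n D N = 0) (hFN : mink n F N = 0)
    (hGN : mink n G N = 1) (hNN : mink n N N = -2) :
    4 • K + D = 2 • F + 2 • G + N :=
  case9_M4_decomposition_general minkForm_isSymm minkForm_hodgeIndexProperty
    hKK hKD hDD hKF hDF hFF hKG hDG hGG hFG hKN hDN hFN hGN hNN
end
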